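/- Let λ > 0, let W ⊆ ℝⁿ be open, and let f : W → ℝ be a smooth solution on W of the translator equation with velocity −λe_{n+1}, i.e., (1 + |∇f|²)·Δf − ⟨∇f, (D²f)∇f⟩ = −λ·(1 + |∇f|²) on W. Then for every nonempty compact set K ⊆ W, sup over x ∈ K of |∇f(x)| is at most sup over x in the topological frontier of K of |∇f(x)|. -/

import Mathlib

open scoped RealInnerProductSpace

/-- The Hessian of `f` at `x`, applied to the vector `ξ` (i.e. `(D²f(x))ξ`). -/
noncomputable def hess {n : ℕ} (f : EuclideanSpace ℝ (Fin n) → ℝ)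
    (x ξ : EuclideanSpace ℝ (Fin n)) : EuclideanSpace ℝ (Fin n) :=
  fderiv ℝ (gradient f) x ξ

/-- The Laplacian of `f` at `x`, as the trace of the Hessian. -/
noncomputable def lap {n : ℕ} (f : EuclideanSpace ℝ (Fin n) → ℝ)
    (x : EuclideanSpace ℝ (Fin n)) : ℝ :=
  ∑ i, ⟪hess f x (EuclideanSpace.single i 1), EuclideanSpace.single i 1⟫

/-- `f` satisfies the translator equation with velocity `(v', vn) ∈ ℝⁿ × ℝ` at the point `x`:
`(1 + |∇f|²)·Δf − ⟨∇f, (D²f)∇f⟩ = (v_{n+1} − ⟨v', ∇f⟩)·(1 + |∇f|²)`. -/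
def TranslatorEqAt {n : ℕ} (f : EuclideanSpace ℝ (Fin n) → ℝ)
    (v' : EuclideanSpace ℝ (Fin n)) (vn : ℝ) (x : EuclideanSpace ℝ (Fin n)) : Prop :=
  (1 + ‖gradient f x‖ ^ 2) * lap f x - ⟪gradient f x, hess f x (gradient f x)⟫
    = (vn - ⟪v', gradient f x⟫) * (1 + ‖gradient f x‖ ^ 2)

/-!
A translator solves an equation `F(∇f, D²f) = 0` which is elliptic and involves neither `x` nor the
value of `f`. Differentiating it in a direction `ξ` shows that `∂_ξ f` satisfies a linear elliptic
equation without zeroth-order term, so `∂_ξ f` obeys the weak maximum principle. As `|∇f|` is the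
supremum of `∂_ξ f` over unit vectors `ξ`, it obeys the maximum principle as well.
-/

open Filter Set Topology

section LocalMax

variable {E : Type*} [NormedAddCommGroup E] [NormedSpace ℝ E]

theorem differentiableAt_fderiv {F : Type*} [NormedAddCommGroup F] [NormedSpace ℝ F] {u : E → F}
    {x : E} (hu : ContDiffAt ℝ 2 u x) : DifferentiableAt ℝ (fderiv ℝ u) x :=
  (hu.fderiv_right (m := 1) (by norm_num)).differentiableAt (by simp)

theorem deriv_deriv_nonpos_of_isLocalMax {g : ℝ → ℝ} {a : ℝ} (hmax : IsLocalMax g a)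
    (hg : ContinuousAt g a) : deriv (deriv g) a ≤ 0 := by
  by_contra! hpos
  have hmin : IsLocalMin g a := isLocalMin_of_deriv_deriv_pos hpos hmax.deriv_eq_zero hg
  have hconst : g =ᶠ[𝓝 a] fun _ => g a := by
    filter_upwards [hmax, hmin] with t hle hge using le_antisymm hle hge
  exact hpos.ne' (by simp [hconst.deriv.deriv_eq])

theorem fderiv_fderiv_apply_self_nonpos_of_isLocalMax {u : E → ℝ} {x : E}
    (hmax : IsLocalMax u x) (hu : ContDiffAt ℝ 2 u x) (ξ : E) :
    fderiv ℝ (fderiv ℝ u) x ξ ξ ≤ 0 := by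
  let line : ℝ → E := fun t => x + t • ξ
  have hline (t : ℝ) : HasDerivAt line ξ t := by
    simpa [line] using ((hasDerivAt_id t).smul_const ξ).const_add x
  have hline_zero : line 0 = x := by simp [line]
  have hline_tendsto : Tendsto line (𝓝 0) (𝓝 x) := hline_zero ▸ (hline 0).continuousAt.tendsto
  have hfirst : deriv (u ∘ line) =ᶠ[𝓝 0] fun t => fderiv ℝ u (line t) ξ := by
    filter_upwards [hline_tendsto.eventually (hu.eventually (by simp))] with t ht
    exact ((ht.differentiableAt (by simp)).hasFDerivAt.comp_hasDerivAt t (hline t)).deriv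
  have hsecond : HasDerivAt (fun t => fderiv ℝ u (line t) ξ) (fderiv ℝ (fderiv ℝ u) x ξ ξ) 0 := by
    have hdiff : DifferentiableAt ℝ (fderiv ℝ u) (line 0) :=
      differentiableAt_fderiv (hline_zero ▸ hu)
    simpa [hline_zero] using
      (hdiff.hasFDerivAt.comp_hasDerivAt 0 (hline 0)).clm_apply (hasDerivAt_const 0 ξ)
  have hmax_line : IsLocalMax (u ∘ line) 0 := by
    simpa [IsLocalMax, IsMaxFilter, hline_zero] using hline_tendsto.eventually hmax
  have hcont : ContinuousAt (u ∘ line) 0 :=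
    ContinuousAt.comp (hline_zero ▸ hu.continuousAt) (hline 0).continuousAt
  rw [← hsecond.deriv, ← hfirst.deriv_eq]
  exact deriv_deriv_nonpos_of_isLocalMax hmax_line hcont

end LocalMax

section Jet

variable {E : Type*} [NormedAddCommGroup E] [NormedSpace ℝ E]

variable (E) in
/-- The space of pairs `(Du(x), D²u(x))`, i.e. of second-order jets without the value `u(x)`. -/
abbrev DerivJet := (E →L[ℝ] ℝ) × (E →L[ℝ] E →L[ℝ] ℝ)

-- Shortcut instance: the search for the module structure underlying the norm fails without it.
noncomputable instance :
    @Module ℝ (DerivJet E) _ NormedAddCommGroup.toAddCommGroup.toAddCommMonoid :=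
  Prod.normedSpace.toModule

/-- The first and second derivatives `(Du(x), D²u(x))`, on which the equations considered here
depend. -/
noncomputable def derivJet (u : E → ℝ) (x : E) : DerivJet E :=
  (fderiv ℝ u x, fderiv ℝ (fderiv ℝ u) x)

theorem contDiffAt_fderiv_apply {f : E → ℝ} {x : E} (hf : ContDiffAt ℝ 3 f x) (ξ : E) :
    ContDiffAt ℝ 2 (fun y => fderiv ℝ f y ξ) x :=
  (hf.fderiv_right (m := 2) (by norm_num)).clm_apply contDiffAt_const

theorem contDiffAt_derivJet {f : E → ℝ} {x : E} (hf : ContDiffAt ℝ 3 f x) :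
    ContDiffAt ℝ 1 (derivJet f) x :=
  (hf.fderiv_right (by norm_num)).prodMk
    ((hf.fderiv_right (m := 2) (by norm_num)).fderiv_right (by norm_num))

theorem derivJet_add_const_smul {u h : E → ℝ} {x : E} (hu : ContDiffAt ℝ 2 u x)
    (hh : ContDiffAt ℝ 2 h x) (ε : ℝ) :
    derivJet (u + ε • h) x = derivJet u x + ε • derivJet h x := by
  have hfirst : fderiv ℝ (u + ε • h) =ᶠ[𝓝 x] fderiv ℝ u + ε • fderiv ℝ h := by
    filter_upwards [hu.eventually (by simp), hh.eventually (by simp)] with y huy hhy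
    have hhy' := hhy.differentiableAt (by simp)
    rw [fderiv_add (huy.differentiableAt (by simp)) (hhy'.const_smul ε), fderiv_const_smul hhy']
    rfl
  have hh' := differentiableAt_fderiv hh
  refine Prod.ext hfirst.self_of_nhds ?_
  simp only [derivJet, Prod.snd_add, Prod.smul_snd]
  rw [hfirst.fderiv_eq, fderiv_add (differentiableAt_fderiv hu) (hh'.const_smul ε),
    fderiv_const_smul hh']

theorem fderiv_fderiv_apply_const {F : Type*} [NormedAddCommGroup F] [NormedSpace ℝ F] {f : E → F}
    {x : E} (hf : ContDiffAt ℝ 2 f x) (ξ : E) :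
    fderiv ℝ (fun y => fderiv ℝ f y ξ) x = fderiv ℝ (fderiv ℝ f) x ξ := by
  ext η
  rw [fderiv_clm_apply (differentiableAt_fderiv hf) (differentiableAt_const ξ)]
  simpa using hf.isSymmSndFDerivAt (by simp) η ξ

theorem fderiv_derivJet_apply {f : E → ℝ} {x : E} (hf : ContDiffAt ℝ 3 f x) (ξ : E) :
    fderiv ℝ (derivJet f) x ξ = derivJet (fun y => fderiv ℝ f y ξ) x := by
  have hDf : ContDiffAt ℝ 2 (fderiv ℝ f) x := hf.fderiv_right (by norm_num)
  have hfirst : fderiv ℝ (fun y => fderiv ℝ f y ξ) =ᶠ[𝓝 x] fun y => fderiv ℝ (fderiv ℝ f) y ξ := by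
    filter_upwards [hf.eventually (by simp)] with y hy
    exact fderiv_fderiv_apply_const (hy.of_le (by norm_num)) ξ
  have hjet : fderiv ℝ (derivJet f) x =
      (fderiv ℝ (fderiv ℝ f) x).prod (fderiv ℝ (fderiv ℝ (fderiv ℝ f)) x) :=
    (hDf.differentiableAt (by simp)).fderiv_prodMk (differentiableAt_fderiv hDf)
  rw [hjet, derivJet, hfirst.self_of_nhds, hfirst.fderiv_eq, fderiv_fderiv_apply_const hDf]
  rfl

end Jet

section MaximumPrinciple

theorem exists_pos_forall_mul_add_pos {X : Type*} [TopologicalSpace X] {K : Set X} {a b : X → ℝ}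
    (hK : IsCompact K) (ha : ContinuousOn a K) (hb : ContinuousOn b K) (hpos : ∀ x ∈ K, 0 < a x) :
    ∃ μ > 0, ∀ x ∈ K, 0 < μ * a x + b x := by
  obtain ⟨m, hm⟩ : BddBelow ((b / a) '' K) :=
    hK.bddBelow_image (hb.div ha fun x hx => (hpos x hx).ne')
  refine ⟨|m| + 1, by positivity, fun x hx => ?_⟩
  have hratio : -(|m| + 1) < b x / a x := by
    linarith [show m ≤ b x / a x from hm (mem_image_of_mem _ hx), neg_abs_le m]
  linarith [(lt_div_iff₀ (hpos x hx)).mp hratio]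

variable {E : Type*} [NormedAddCommGroup E] [NormedSpace ℝ E]

/-- Ellipticity of a linear form `(Du, D²u) ↦ ⟨b, Du⟩ + tr(A D²u)`, that is, positive definiteness
of `A`. The matrix `A` enters only through the values of the form on the pairs `(0, B)`. -/
structure IsEllipticForm (L : DerivJet E →L[ℝ] ℝ) : Prop where
  nonpos : ∀ B : E →L[ℝ] E →L[ℝ] ℝ, (∀ ξ, B ξ ξ ≤ 0) → L (0, B) ≤ 0
  pos : ∀ ℓ : E →L[ℝ] ℝ, ℓ ≠ 0 → 0 < L (0, ℓ.smulRight ℓ)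

variable {K : Set E} {L : E → DerivJet E →L[ℝ] ℝ} {u : E → ℝ} {x : E}

theorem IsEllipticForm.not_isLocalMax {L : DerivJet E →L[ℝ] ℝ} (hL : IsEllipticForm L)
    (hu : ContDiffAt ℝ 2 u x) (hpos : 0 < L (derivJet u x)) : ¬ IsLocalMax u x := by
  intro hmax
  rw [derivJet, hmax.fderiv_eq_zero] at hpos
  exact hpos.not_ge (hL.nonpos _ (fderiv_fderiv_apply_self_nonpos_of_isLocalMax hmax hu))

theorem derivJet_exp_mul (ℓ : E →L[ℝ] ℝ) (μ : ℝ) (x : E) :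
    derivJet (fun y => Real.exp (μ * ℓ y)) x =
      (Real.exp (μ * ℓ x) * μ) • (μ • ((0 : E →L[ℝ] ℝ), ℓ.smulRight ℓ) + (ℓ, 0)) := by
  have hexp (y : E) :
      HasFDerivAt (fun y => Real.exp (μ * ℓ y)) (Real.exp (μ * ℓ y) • μ • ℓ) y :=
    (ℓ.hasFDerivAt.const_mul μ).exp
  have hfirst : fderiv ℝ (fun y => Real.exp (μ * ℓ y)) = fun y => Real.exp (μ * ℓ y) • μ • ℓ :=
    funext fun y => (hexp y).fderiv
  rw [derivJet, hfirst, ((hexp x).smul_const (μ • ℓ)).fderiv]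
  ext <;> simp only [ContinuousLinearMap.smulRight_apply, Prod.smul_mk, Prod.mk_add_mk, add_apply,
    smul_apply, zero_apply, smul_eq_mul, smul_zero, zero_add, add_zero] <;> ring

theorem map_derivJet_exp_mul (L : DerivJet E →L[ℝ] ℝ) (ℓ : E →L[ℝ] ℝ) (μ : ℝ) (x : E) :
    L (derivJet (fun y => Real.exp (μ * ℓ y)) x) =
      Real.exp (μ * ℓ x) * μ * (μ * L (0, ℓ.smulRight ℓ) + L (ℓ, 0)) := by
  rw [derivJet_exp_mul, L.map_smul, L.map_add, L.map_smul, smul_eq_mul, smul_eq_mul]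

-- The second-order term of `exp (μ ℓ)` carries one more factor `μ` than the first-order term.
theorem exists_nonneg_derivJet_pos [Nontrivial E] (hK : IsCompact K) (hL : ContinuousOn L K)
    (hell : ∀ x ∈ K, IsEllipticForm (L x)) :
    ∃ h : E → ℝ, ContDiff ℝ 2 h ∧ 0 ≤ h ∧ ∀ x ∈ K, 0 < L x (derivJet h x) := by
  obtain ⟨ℓ, hℓ⟩ := exists_ne (0 : E →L[ℝ] ℝ)
  obtain ⟨μ, hμ, hpos⟩ := exists_pos_forall_mul_add_pos hK (hL.eval_const (0, ℓ.smulRight ℓ))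
    (hL.eval_const (ℓ, 0)) fun x hx => (hell x hx).pos ℓ hℓ
  refine ⟨fun y => Real.exp (μ * ℓ y), by fun_prop, fun y => (Real.exp_pos _).le, fun x hx => ?_⟩
  rw [map_derivJet_exp_mul]
  exact mul_pos (mul_pos (Real.exp_pos _) hμ) (hpos x hx)

theorem exists_mem_frontier_isMaxOn (hK : IsCompact K) (hKne : K.Nonempty)
    (hu : ∀ x ∈ K, ContDiffAt ℝ 2 u x) (hell : ∀ x ∈ K, IsEllipticForm (L x))
    (hsub : ∀ x ∈ interior K, 0 < L x (derivJet u x)) : ∃ y ∈ frontier K, IsMaxOn u K y := by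
  obtain ⟨y, hyK, hy⟩ :=
    hK.exists_isMaxOn hKne fun x hx => (hu x hx).continuousAt.continuousWithinAt
  refine ⟨y, ?_, hy⟩
  rw [hK.isClosed.frontier_eq]
  exact ⟨hyK, fun hint => (hell y hyK).not_isLocalMax (hu y hyK) (hsub y hint)
    (hy.isLocalMax (mem_interior_iff_mem_nhds.mp hint))⟩

theorem le_of_forall_mem_frontier_le [Nontrivial E] (hK : IsCompact K) (hL : ContinuousOn L K)
    (hell : ∀ x ∈ K, IsEllipticForm (L x)) (hu : ∀ x ∈ K, ContDiffAt ℝ 2 u x)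
    (hsub : ∀ x ∈ interior K, 0 ≤ L x (derivJet u x)) {C : ℝ} (hC : ∀ y ∈ frontier K, u y ≤ C)
    (hx : x ∈ K) : u x ≤ C := by
  obtain ⟨h, hh, hh_nonneg, hh_pos⟩ := exists_nonneg_derivJet_pos hK hL hell
  obtain ⟨M, hM⟩ := hK.bddAbove_image hh.continuous.continuousOn
  have hle (ε : ℝ) (hε : 0 < ε) : u x ≤ C + ε * M := by
    obtain ⟨y, hyfront, hymax⟩ : ∃ y ∈ frontier K, IsMaxOn (u + ε • h) K y := by
      refine exists_mem_frontier_isMaxOn hK ⟨x, hx⟩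
        (fun z hz => (hu z hz).add (hh.contDiffAt.const_smul ε)) hell fun z hz => ?_
      have hzK := interior_subset hz
      rw [derivJet_add_const_smul (hu z hzK) hh.contDiffAt, map_add, map_smul, smul_eq_mul]
      exact add_pos_of_nonneg_of_pos (hsub z hz) (mul_pos hε (hh_pos z hzK))
    have hyK : y ∈ K := hK.isClosed.frontier_subset hyfront
    calc u x ≤ u x + ε * h x := le_add_of_nonneg_right (mul_nonneg hε.le (hh_nonneg x))
      _ ≤ u y + ε * h y := hymax hx
      _ ≤ C + ε * M := by gcongr; exacts [hC y hyfront, hM (mem_image_of_mem h hyK)]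
  have hlim : Tendsto (fun ε : ℝ => C + ε * M) (𝓝[>] 0) (𝓝 C) :=
    tendsto_nhdsWithin_of_tendsto_nhds (Continuous.tendsto' (by fun_prop) 0 C (by simp))
  exact ge_of_tendsto hlim (eventually_mem_nhdsWithin.mono hle)

end MaximumPrinciple

section GradientBound

variable {E : Type*} [NormedAddCommGroup E] [NormedSpace ℝ E] {F : DerivJet E → ℝ} {f : E → ℝ}
  {K : Set E}

theorem fderiv_derivJet_fderiv_apply_eq_zero {x : E} (hF : Differentiable ℝ F)
    (hf : ContDiffAt ℝ 3 f x) (hFf : ∀ᶠ y in 𝓝 x, F (derivJet f y) = 0) (ξ : E) :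
    fderiv ℝ F (derivJet f x) (derivJet (fun y => fderiv ℝ f y ξ) x) = 0 := by
  have hzero : F ∘ derivJet f =ᶠ[𝓝 x] fun _ => 0 := hFf
  rw [← fderiv_derivJet_apply hf, ← ContinuousLinearMap.comp_apply,
    ← fderiv_comp x (hF _) ((contDiffAt_derivJet hf).differentiableAt (by simp)), hzero.fderiv_eq]
  simp

theorem norm_fderiv_le_of_forall_mem_frontier (hF : ContDiff ℝ 1 F) (hK : IsCompact K)
    (hell : ∀ x ∈ K, IsEllipticForm (fderiv ℝ F (derivJet f x)))
    (hf : ∀ x ∈ K, ContDiffAt ℝ 3 f x) (hFf : ∀ x ∈ interior K, F (derivJet f x) = 0)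
    {C : ℝ} (hC₀ : 0 ≤ C) (hC : ∀ y ∈ frontier K, ‖fderiv ℝ f y‖ ≤ C) {x : E} (hx : x ∈ K) :
    ‖fderiv ℝ f x‖ ≤ C := by
  have hdir (ξ : E) (hξ : ξ ≠ 0) : fderiv ℝ f x ξ ≤ C * ‖ξ‖ := by
    have : Nontrivial E := ⟨ξ, 0, hξ⟩
    refine le_of_forall_mem_frontier_le hK (L := fun x => fderiv ℝ F (derivJet f x)) ?_ hell
      (fun y hy => contDiffAt_fderiv_apply (hf y hy) ξ) (fun y hy => ?_) (fun y hy => ?_) hx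
    · exact (hF.continuous_fderiv (by simp)).comp_continuousOn
        fun y hy => (contDiffAt_derivJet (hf y hy)).continuousAt.continuousWithinAt
    · exact (fderiv_derivJet_fderiv_apply_eq_zero (hF.differentiable (by simp))
        (hf y (interior_subset hy)) (eventually_of_mem (isOpen_interior.mem_nhds hy) hFf) ξ).ge
    · exact (le_abs_self _).trans ((fderiv ℝ f y).le_of_opNorm_le (hC y hy) ξ)
  refine ContinuousLinearMap.opNorm_le_bound' _ hC₀ fun ξ hξ => abs_le'.mpr ?_
  have hξ₀ : ξ ≠ 0 := norm_ne_zero_iff.mp hξ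
  exact ⟨hdir ξ hξ₀, by simpa using hdir (-ξ) (neg_ne_zero.mpr hξ₀)⟩

theorem sSup_norm_fderiv_le_sSup_frontier (hF : ContDiff ℝ 1 F) (hK : IsCompact K)
    (hKne : K.Nonempty) (hell : ∀ x ∈ K, IsEllipticForm (fderiv ℝ F (derivJet f x)))
    (hf : ∀ x ∈ K, ContDiffAt ℝ 3 f x) (hFf : ∀ x ∈ interior K, F (derivJet f x) = 0) :
    sSup ((fun x => ‖fderiv ℝ f x‖) '' K) ≤ sSup ((fun x => ‖fderiv ℝ f x‖) '' frontier K) := by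
  have hcont : ContinuousOn (fun x => ‖fderiv ℝ f x‖) K := fun x hx =>
    (contDiffAt_derivJet (hf x hx)).continuousAt.fst.norm.continuousWithinAt
  have hbdd : BddAbove ((fun x => ‖fderiv ℝ f x‖) '' frontier K) :=
    (hK.bddAbove_image hcont).mono (image_mono hK.isClosed.frontier_subset)
  have hsSup_nonneg : 0 ≤ sSup ((fun x => ‖fderiv ℝ f x‖) '' frontier K) :=
    Real.sSup_nonneg (forall_mem_image.mpr fun x _ => norm_nonneg _)
  exact csSup_le (hKne.image _) <| forall_mem_image.mpr fun x hx =>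
    norm_fderiv_le_of_forall_mem_frontier hF hK hell hf hFf hsSup_nonneg
      (fun y hy => le_csSup hbdd (mem_image_of_mem _ hy)) hx

end GradientBound

section TranslatorFun

variable {ι E : Type*} [Fintype ι] [NormedAddCommGroup E] [InnerProductSpace ℝ E]

theorem norm_sq_mul_sum_apply_self_le (b : OrthonormalBasis ι ℝ E) {B : E →L[ℝ] E →L[ℝ] ℝ}
    (hB : ∀ ξ, B ξ ξ ≤ 0) (p : E) : ‖p‖ ^ 2 * ∑ i, B (b i) (b i) ≤ B p p := by
  let c : ι → ℝ := fun i => ⟪b i, p⟫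
  have hnorm : ∑ i, c i ^ 2 = ‖p‖ ^ 2 := by simpa using b.sum_sq_norm_inner_right p
  have hexpand : ∑ i, ∑ j, c i * c j * B (b i) (b j) = B p p := by
    conv_rhs => rw [← b.sum_repr' p]
    simp only [map_sum, map_smul, sum_apply, smul_apply, smul_eq_mul, Finset.mul_sum, c]
    rw [Finset.sum_comm]
    exact Finset.sum_congr rfl fun i _ => Finset.sum_congr rfl fun j _ => by ring
  have hexpand_swap : ∑ i, ∑ j, c i * c j * B (b j) (b i) = B p p := by
    rw [Finset.sum_comm, ← hexpand]
    exact Finset.sum_congr rfl fun i _ => Finset.sum_congr rfl fun j _ => by ring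
  have hlagrange : ∑ i, ∑ j, B (c j • b i - c i • b j) (c j • b i - c i • b j) =
      2 * (‖p‖ ^ 2 * ∑ i, B (b i) (b i) - B p p) := by
    calc _ = ∑ i, ∑ j, (c j ^ 2 * B (b i) (b i) + c i ^ 2 * B (b j) (b j)
            - c i * c j * B (b i) (b j) - c i * c j * B (b j) (b i)) := by
          refine Finset.sum_congr rfl fun i _ => Finset.sum_congr rfl fun j _ => ?_
          simp only [map_sub, map_smul, sub_apply, smul_apply, smul_eq_mul]
          ring
      _ = _ := by
          simp only [Finset.sum_sub_distrib, Finset.sum_add_distrib, hexpand, hexpand_swap,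
            ← Finset.sum_mul, ← Finset.mul_sum, hnorm]
          ring
  linarith [Finset.sum_nonpos fun i (_ : i ∈ Finset.univ) =>
    Finset.sum_nonpos fun j (_ : j ∈ Finset.univ) => hB (c j • b i - c i • b j)]

variable [CompleteSpace E]

/-- The function `F` for which the translator equation with velocity `(v', vn)` reads
`F(Df, D²f) = 0`; here `p` is the gradient, and `b` serves to compute the trace of `D²f`. -/
noncomputable def translatorFun (b : OrthonormalBasis ι ℝ E) (v' : E) (vn : ℝ) (z : DerivJet E) :
    ℝ :=
  let p := (InnerProductSpace.toDual ℝ E).symm z.1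
  (1 + ‖p‖ ^ 2) * ∑ i, z.2 (b i) (b i) - z.2 p p - (vn - ⟪v', p⟫) * (1 + ‖p‖ ^ 2)

theorem contDiff_translatorFun (b : OrthonormalBasis ι ℝ E) (v' : E) (vn : ℝ) :
    ContDiff ℝ 1 (translatorFun b v' vn) := by
  have hp : ContDiff ℝ 1 fun z : DerivJet E => (InnerProductSpace.toDual ℝ E).symm z.1 :=
    (InnerProductSpace.toDual ℝ E).symm.contDiff.comp contDiff_fst
  have hs := contDiff_const (c := (1 : ℝ)).add (hp.norm_sq ℝ)
  exact ((hs.mul (by fun_prop)).sub ((contDiff_snd.clm_apply hp).clm_apply hp)).sub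
    ((contDiff_const.sub (contDiff_const.inner ℝ hp)).mul hs)

theorem fderiv_translatorFun_apply (b : OrthonormalBasis ι ℝ E) (v' : E) (vn : ℝ)
    (z : DerivJet E) (B : E →L[ℝ] E →L[ℝ] ℝ) :
    fderiv ℝ (translatorFun b v' vn) z (0, B) =
      (1 + ‖(InnerProductSpace.toDual ℝ E).symm z.1‖ ^ 2) * ∑ i, B (b i) (b i)
        - B ((InnerProductSpace.toDual ℝ E).symm z.1)
          ((InnerProductSpace.toDual ℝ E).symm z.1) := by
  set p := (InnerProductSpace.toDual ℝ E).symm z.1 with hp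
  set a := (1 + ‖p‖ ^ 2) * ∑ i, B (b i) (b i) - B p p
  have haffine (t : ℝ) :
      translatorFun b v' vn (z + t • (0, B)) = translatorFun b v' vn z + t * a := by
    simp only [translatorFun, Prod.fst_add, Prod.snd_add, Prod.smul_mk, smul_zero, add_zero, ← hp,
      add_apply, smul_apply, smul_eq_mul, Finset.sum_add_distrib, ← Finset.mul_sum, a]
    ring
  have hdiff := (contDiff_translatorFun b v' vn).differentiable (by simp) z
  rw [← hdiff.lineDeriv_eq_fderiv, lineDeriv]
  simp only [haffine]
  simp

theorem isEllipticForm_fderiv_translatorFun (b : OrthonormalBasis ι ℝ E) (v' : E) (vn : ℝ)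
    (z : DerivJet E) : IsEllipticForm (fderiv ℝ (translatorFun b v' vn) z) where
  nonpos B hB := by
    rw [fderiv_translatorFun_apply]
    linarith [norm_sq_mul_sum_apply_self_le b hB ((InnerProductSpace.toDual ℝ E).symm z.1),
      Finset.sum_nonpos fun i (_ : i ∈ Finset.univ) => hB (b i)]
  pos ℓ hℓ := by
    rw [fderiv_translatorFun_apply]
    have hle := norm_sq_mul_sum_apply_self_le b (B := -ℓ.smulRight ℓ)
      (fun ξ => by simpa using mul_self_nonneg (ℓ ξ)) ((InnerProductSpace.toDual ℝ E).symm z.1)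
    obtain ⟨i, hi⟩ : ∃ i, ℓ (b i) ≠ 0 := by
      by_contra! hzero
      exact hℓ (ContinuousLinearMap.coe_injective (b.toBasis.ext (by simpa using hzero)))
    have hpos : 0 < ∑ i, ℓ.smulRight ℓ (b i) (b i) :=
      Finset.sum_pos' (fun j _ => by simpa using mul_self_nonneg (ℓ (b j)))
        ⟨i, Finset.mem_univ i, by simpa using mul_self_pos.mpr hi⟩
    simp only [neg_apply, Finset.sum_neg_distrib] at hle
    linarith

end TranslatorFun

section Translator

variable {n : ℕ} {f : EuclideanSpace ℝ (Fin n) → ℝ} {x : EuclideanSpace ℝ (Fin n)}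

theorem inner_hess (hf : ContDiffAt ℝ 2 f x) (ξ η : EuclideanSpace ℝ (Fin n)) :
    ⟪hess f x ξ, η⟫ = fderiv ℝ (fderiv ℝ f) x ξ η := by
  have hgrad := (InnerProductSpace.toDual ℝ
    (EuclideanSpace ℝ (Fin n))).symm.toContinuousLinearEquiv.hasFDerivAt.comp x
      (differentiableAt_fderiv hf).hasFDerivAt
  have hhess : hess f x ξ = (InnerProductSpace.toDual ℝ (EuclideanSpace ℝ (Fin n))).symm
      (fderiv ℝ (fderiv ℝ f) x ξ) := congrArg (· ξ) hgrad.fderiv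
  rw [hhess, InnerProductSpace.toDual_symm_apply]

theorem translatorEqAt_iff_translatorFun_eq_zero (hf : ContDiffAt ℝ 2 f x)
    (v' : EuclideanSpace ℝ (Fin n)) (vn : ℝ) :
    TranslatorEqAt f v' vn x ↔
      translatorFun (EuclideanSpace.basisFun (Fin n) ℝ) v' vn (derivJet f x) = 0 := by
  rw [TranslatorEqAt, lap, real_inner_comm, inner_hess hf, ← sub_eq_zero]
  simp only [inner_hess hf, translatorFun, derivJet, EuclideanSpace.basisFun_apply]
  rfl

theorem subsequent_singularities_stmt8_general {v' : EuclideanSpace ℝ (Fin n)} {vn : ℝ}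
    {W : Set (EuclideanSpace ℝ (Fin n))} (hW : IsOpen W) (hf : ContDiffOn ℝ 3 f W)
    (ht : ∀ x ∈ W, TranslatorEqAt f v' vn x) {K : Set (EuclideanSpace ℝ (Fin n))}
    (hKcpt : IsCompact K) (hKne : K.Nonempty) (hKW : K ⊆ W) :
    sSup ((fun x => ‖gradient f x‖) '' K) ≤ sSup ((fun x => ‖gradient f x‖) '' frontier K) := by
  have hsmooth (x) (hx : x ∈ K) : ContDiffAt ℝ 3 f x := hf.contDiffAt (hW.mem_nhds (hKW hx))
  simp only [gradient, LinearIsometryEquiv.norm_map]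
  refine sSup_norm_fderiv_le_sSup_frontier (contDiff_translatorFun _ v' vn) hKcpt hKne
    (fun x _ => isEllipticForm_fderiv_translatorFun (EuclideanSpace.basisFun (Fin n) ℝ) v' vn _)
    hsmooth fun x hx => ?_
  have hxK := interior_subset hx
  exact (translatorEqAt_iff_translatorFun_eq_zero ((hsmooth x hxK).of_le (by norm_num)) v' vn).mp
    (ht x (hKW hxK))

end Translator

/-- interior gradient bound for graphical translators with velocity `−λe_{n+1}`.
If `f` is a smooth solution on an open `W ⊆ ℝⁿ` of
`(1 + |∇f|²)·Δf − ⟨∇f,(D²f)∇f⟩ = −λ·(1 + |∇f|²)` with `λ > 0`, then for every nonempty compact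
`K ⊆ W`, the supremum of `|∇f|` over `K` is at most its supremum over the frontier of `K`. -/
theorem subsequent_singularities_stmt8 {n : ℕ}
    (lam : ℝ) (hlam : 0 < lam)
    (W : Set (EuclideanSpace ℝ (Fin n))) (hW : IsOpen W)
    (f : EuclideanSpace ℝ (Fin n) → ℝ)
    (hf : ContDiffOn ℝ (⊤ : ℕ∞) f W)
    (ht : ∀ x ∈ W,
      (1 + ‖gradient f x‖ ^ 2) * lap f x - ⟪gradient f x, hess f x (gradient f x)⟫
        = -lam * (1 + ‖gradient f x‖ ^ 2))
    (K : Set (EuclideanSpace ℝ (Fin n))) (hKcpt : IsCompact K) (hKne : K.Nonempty)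
    (hKW : K ⊆ W) :
    sSup ((fun x => ‖gradient f x‖) '' K) ≤ sSup ((fun x => ‖gradient f x‖) '' frontier K) := by
  exact subsequent_singularities_stmt8_general (v' := 0) (vn := -lam) hW
    (hf.of_le (WithTop.coe_le_coe.2 le_top)) (by simpa [TranslatorEqAt] using ht) hKcpt hKne hKW
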